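/- arXiv:2401.07558 — 4 statements merged into one kernel-verified Lean document; each statement's English description precedes it below -/
import Mathlib

section
/- (Lemma 2) Let K and E be positive integers, η > 0, G ≥ 0, κ ≥ 0, λ ≥ 0, ε ≥ 0. For each k = 1, …, K let h_k : ℝ^{d_k} → ℝ^m be a κ-Lipschitz map and let n_k ≥ 0 be weights with ∑_{k=1}^K n_k ≤ 1. On a probability space, for each k let φ_k be a random point of ℝ^{d_k} and let g_{k,0}, …, g_{k,E−1} be integrable random vectors in ℝ^{d_k} with E[‖g_{k,e}‖] ≤ G for every e, and set φ'_k = φ_k − η ∑_{e=0}^{E−1} g_{k,e}. Let u and u' be random vectors in ℝ^m with λ‖u‖ ≤ ε and λ‖u'‖ ≤ ε almost surely, and define the global prototypes 𝒫 = ∑_{k=1}^K n_k h_k(φ_k) − u and 𝒫' = ∑_{k=1}^K n_k h_k(φ'_k) − u'. Let ℓ_d : ℝ^d → ℝ and P : ℝ^d → ℝ^m be measurable maps, let ω be a random point of ℝ^d, and define the local losses ℓ(ω) = ℓ_d(ω) + λ‖P(ω) − 𝒫‖ and ℓ'(ω) = ℓ_d(ω) + λ‖P(ω) − 𝒫'‖.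 Assuming all the quantities below are integrable, E[ℓ'(ω)] ≤ E[ℓ(ω)] + λ κ η E G + 2ε. -/
open MeasureTheory

/-!
Moving from the old prototype to the new one costs at most `lam` times the distance between
them, by the triangle inequality. That distance splits into the two quality-detection gaps, which
cost at most `ε` each, and a weighted sum of the values `dist (h k (φ k)) (h k (φ' k))`. By the
Lipschitz property the latter are at most `κ` times the client displacements, whose expected norms
are at most `η * (E * G)` after `E` gradient steps; a subconvex combination keeps this bound.
-/

section Prototype

open scoped NNReal

variable {ι F : Type*} [SeminormedAddCommGroup F]

/-- The local loss of a client with classification loss `c`, regularisation weight `lam`, local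
prototype `p` and global prototype `q`. -/
def localLoss (c lam : ℝ) (p q : F) : ℝ :=
  c + lam * ‖p - q‖

lemma localLoss_le_add_mul_dist (c : ℝ) {lam : ℝ} (hlam : 0 ≤ lam) (p q q' : F) :
    localLoss c lam p q' ≤ localLoss c lam p q + lam * dist q q' := by
  have htri : ‖p - q'‖ ≤ ‖p - q‖ + dist q q' := by
    simpa only [dist_eq_norm] using dist_triangle p q q'
  simpa only [localLoss, mul_add, add_assoc] using
    add_le_add_right (mul_le_mul_of_nonneg_left htri hlam) c

variable [Fintype ι] [NormedSpace ℝ F] {X : ι → Type*}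

/-- The global prototype aggregated by the server from the client parameters `x k`: the
combination of the local prototypes `h k (x k)` with weights `n k`, less the gap `u` introduced by
quality detection. -/
def globalPrototype (n : ι → ℝ) (h : ∀ k, X k → F) (x : ∀ k, X k) (u : F) : F :=
  (∑ k, n k • h k (x k)) - u

variable [∀ k, PseudoMetricSpace (X k)]

lemma dist_globalPrototype_le {κ : ℝ≥0} {h : ∀ k, X k → F} (hlip : ∀ k, LipschitzWith κ (h k))
    {n : ι → ℝ} (hn : ∀ k, 0 ≤ n k) (x x' : ∀ k, X k) (u u' : F) :
    dist (globalPrototype n h x u) (globalPrototype n h x' u') ≤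
      κ * ∑ k, n k * dist (x k) (x' k) + (‖u‖ + ‖u'‖) := by
  have hterm (k : ι) : dist (n k • h k (x k)) (n k • h k (x' k)) ≤
      κ * (n k * dist (x k) (x' k)) := by
    rw [dist_smul₀, Real.norm_of_nonneg (hn k), mul_left_comm]
    exact mul_le_mul_of_nonneg_left ((hlip k).dist_le_mul _ _) (hn k)
  calc dist (globalPrototype n h x u) (globalPrototype n h x' u')
      ≤ dist (∑ k, n k • h k (x k)) (∑ k, n k • h k (x' k)) + dist u u' := dist_sub_sub_le _ _ _ _
    _ ≤ κ * ∑ k, n k * dist (x k) (x' k) + (‖u‖ + ‖u'‖) := by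
        rw [Finset.mul_sum]
        exact add_le_add (dist_sum_sum_le_of_le _ fun k _ ↦ hterm k) (dist_le_norm_add_norm u u')

lemma localLoss_globalPrototype_le {κ : ℝ≥0} {h : ∀ k, X k → F}
    (hlip : ∀ k, LipschitzWith κ (h k)) {n : ι → ℝ} (hn : ∀ k, 0 ≤ n k) (c : ℝ) {lam ε : ℝ}
    (hlam : 0 ≤ lam) (p : F) (x x' : ∀ k, X k) {u u' : F}
    (hu : lam * ‖u‖ ≤ ε) (hu' : lam * ‖u'‖ ≤ ε) :
    localLoss c lam p (globalPrototype n h x' u') ≤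
      localLoss c lam p (globalPrototype n h x u) +
        (lam * κ * ∑ k, n k * dist (x k) (x' k) + 2 * ε) := by
  have hmove := localLoss_le_add_mul_dist c hlam p (globalPrototype n h x u)
    (globalPrototype n h x' u')
  have hdist := mul_le_mul_of_nonneg_left (dist_globalPrototype_le hlip hn x x' u u') hlam
  linarith

end Prototype

section Expectation

variable {Ω ι : Type*} [MeasurableSpace Ω] {μ : Measure Ω}

lemma integral_sum_mul_le_of_sum_le_one {s : Finset ι} {n : ι → ℝ} (hn : ∀ i ∈ s, 0 ≤ n i)
    (hn_sum : ∑ i ∈ s, n i ≤ 1) {f : ι → Ω → ℝ} (hf_int : ∀ i ∈ s, Integrable (f i) μ)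
    {C : ℝ} (hC : 0 ≤ C) (hf : ∀ i ∈ s, ∫ ω, f i ω ∂μ ≤ C) :
    ∫ ω, ∑ i ∈ s, n i * f i ω ∂μ ≤ C :=
  calc ∫ ω, ∑ i ∈ s, n i * f i ω ∂μ
      = ∑ i ∈ s, n i * ∫ ω, f i ω ∂μ := by
        simp only [integral_finsetSum s fun i hi ↦ (hf_int i hi).const_mul (n i),
          integral_const_mul]
    _ ≤ ∑ i ∈ s, n i * C :=
        Finset.sum_le_sum fun i hi ↦ mul_le_mul_of_nonneg_left (hf i hi) (hn i hi)
    _ = (∑ i ∈ s, n i) * C := (Finset.sum_mul _ _ _).symm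
    _ ≤ C := mul_le_of_le_one_left hC hn_sum

lemma integral_norm_smul_sum_le {𝕜 V : Type*} [NormedField 𝕜] [NormedAddCommGroup V]
    [NormedSpace 𝕜 V] (c : 𝕜) {s : Finset ι} {g : ι → Ω → V}
    (hg_int : ∀ i ∈ s, Integrable (g i) μ) {C : ℝ} (hg : ∀ i ∈ s, ∫ ω, ‖g i ω‖ ∂μ ≤ C) :
    ∫ ω, ‖c • ∑ i ∈ s, g i ω‖ ∂μ ≤ ‖c‖ * (s.card * C) := by
  have hsum : ∫ ω, ‖∑ i ∈ s, g i ω‖ ∂μ ≤ s.card * C :=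
    calc ∫ ω, ‖∑ i ∈ s, g i ω‖ ∂μ
        ≤ ∫ ω, ∑ i ∈ s, ‖g i ω‖ ∂μ :=
          integral_mono (integrable_finsetSum s hg_int).norm
            (integrable_finsetSum s fun i hi ↦ (hg_int i hi).norm) fun _ ↦ norm_sum_le _ _
      _ = ∑ i ∈ s, ∫ ω, ‖g i ω‖ ∂μ := integral_finsetSum s fun i hi ↦ (hg_int i hi).norm
      _ ≤ s.card * C := by simpa only [nsmul_eq_mul] using Finset.sum_le_card_nsmul s _ C hg
  simpa only [norm_smul, integral_const_mul] using
    mul_le_mul_of_nonneg_left hsum (norm_nonneg c)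

end Expectation

section ExpectedLoss

open scoped NNReal

variable {Ω ι F : Type*} [MeasurableSpace Ω] {μ : Measure Ω} [IsProbabilityMeasure μ]
  [Fintype ι] [SeminormedAddCommGroup F] [NormedSpace ℝ F] {X : ι → Type*}

lemma integral_localLoss_le_of_integral_dist_le [∀ k, PseudoMetricSpace (X k)] {κ : ℝ≥0}
    {h : ∀ k, X k → F} (hlip : ∀ k, LipschitzWith κ (h k)) {n : ι → ℝ} (hn : ∀ k, 0 ≤ n k)
    (hn_sum : ∑ k, n k ≤ 1) {φ φ' : ∀ k, Ω → X k}
    (hφ_int : ∀ k, Integrable (fun ω ↦ dist (φ k ω) (φ' k ω)) μ) {D : ℝ} (hD : 0 ≤ D)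
    (hφ : ∀ k, ∫ ω, dist (φ k ω) (φ' k ω) ∂μ ≤ D) {lam ε : ℝ} (hlam : 0 ≤ lam) {u u' : Ω → F}
    (hu : ∀ᵐ ω ∂μ, lam * ‖u ω‖ ≤ ε) (hu' : ∀ᵐ ω ∂μ, lam * ‖u' ω‖ ≤ ε) {q q' : Ω → F}
    (hq : ∀ ω, q ω = globalPrototype n h (φ · ω) (u ω))
    (hq' : ∀ ω, q' ω = globalPrototype n h (φ' · ω) (u' ω)) {c : Ω → ℝ} {p : Ω → F}
    (hℓ_int : Integrable (fun ω ↦ localLoss (c ω) lam (p ω) (q ω)) μ)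
    (hℓ'_int : Integrable (fun ω ↦ localLoss (c ω) lam (p ω) (q' ω)) μ) :
    ∫ ω, localLoss (c ω) lam (p ω) (q' ω) ∂μ ≤
      ∫ ω, localLoss (c ω) lam (p ω) (q ω) ∂μ + lam * κ * D + 2 * ε := by
  let drift (ω : Ω) : ℝ := ∑ k, n k * dist (φ k ω) (φ' k ω)
  have hdrift_int : Integrable (fun ω ↦ lam * κ * drift ω) μ :=
    (integrable_finsetSum _ fun k _ ↦ (hφ_int k).const_mul (n k)).const_mul _
  have hdrift : ∫ ω, drift ω ∂μ ≤ D :=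
    integral_sum_mul_le_of_sum_le_one (fun k _ ↦ hn k) hn_sum (fun k _ ↦ hφ_int k) hD
      fun k _ ↦ hφ k
  have hpointwise : ∀ᵐ ω ∂μ, localLoss (c ω) lam (p ω) (q' ω) ≤
      localLoss (c ω) lam (p ω) (q ω) + (lam * κ * drift ω + 2 * ε) := by
    filter_upwards [hu, hu'] with ω hω hω'
    rw [hq, hq']
    exact localLoss_globalPrototype_le hlip hn _ hlam _ _ _ hω hω'
  have hincrement_int : Integrable (fun ω ↦ lam * κ * drift ω + 2 * ε) μ :=
    hdrift_int.add (integrable_const _)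
  calc ∫ ω, localLoss (c ω) lam (p ω) (q' ω) ∂μ
      ≤ ∫ ω, (localLoss (c ω) lam (p ω) (q ω) + (lam * κ * drift ω + 2 * ε)) ∂μ :=
        integral_mono_ae hℓ'_int (hℓ_int.add hincrement_int) hpointwise
    _ = ∫ ω, localLoss (c ω) lam (p ω) (q ω) ∂μ + lam * κ * ∫ ω, drift ω ∂μ + 2 * ε := by
        rw [integral_add hℓ_int hincrement_int, integral_add hdrift_int (integrable_const _),
          integral_const_mul, integral_const, probReal_univ, one_smul, add_assoc]
    _ ≤ ∫ ω, localLoss (c ω) lam (p ω) (q ω) ∂μ + lam * κ * D + 2 * ε := by gcongr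

theorem lemma2_prototype_aggregation_bound_general
    [∀ k, NormedAddCommGroup (X k)] [∀ k, NormedSpace ℝ (X k)] {κ : ℝ≥0} {h : ∀ k, X k → F}
    (hlip : ∀ k, LipschitzWith κ (h k)) {n : ι → ℝ} (hn : ∀ k, 0 ≤ n k) (hn_sum : ∑ k, n k ≤ 1)
    {E : ℕ} {η G : ℝ} (hη : 0 ≤ η) (hG : 0 ≤ G) {g : ∀ k, ℕ → Ω → X k}
    (hg_int : ∀ k, ∀ e < E, Integrable (g k e) μ)
    (hg_norm : ∀ k, ∀ e < E, ∫ ω, ‖g k e ω‖ ∂μ ≤ G) {φ φ' : ∀ k, Ω → X k}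
    (hφ' : ∀ k ω, φ' k ω = φ k ω - η • ∑ e ∈ Finset.range E, g k e ω) {lam ε : ℝ}
    (hlam : 0 ≤ lam) {u u' : Ω → F} (hu : ∀ᵐ ω ∂μ, lam * ‖u ω‖ ≤ ε)
    (hu' : ∀ᵐ ω ∂μ, lam * ‖u' ω‖ ≤ ε) {q q' : Ω → F}
    (hq : ∀ ω, q ω = globalPrototype n h (φ · ω) (u ω))
    (hq' : ∀ ω, q' ω = globalPrototype n h (φ' · ω) (u' ω)) {c : Ω → ℝ} {p : Ω → F}
    (hℓ_int : Integrable (fun ω ↦ localLoss (c ω) lam (p ω) (q ω)) μ)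
    (hℓ'_int : Integrable (fun ω ↦ localLoss (c ω) lam (p ω) (q' ω)) μ) :
    ∫ ω, localLoss (c ω) lam (p ω) (q' ω) ∂μ ≤
      ∫ ω, localLoss (c ω) lam (p ω) (q ω) ∂μ + lam * κ * η * E * G + 2 * ε := by
  have hg_int' (k : ι) : ∀ e ∈ Finset.range E, Integrable (g k e) μ :=
    fun e he ↦ hg_int k e (Finset.mem_range.mp he)
  have hdist (k : ι) (ω : Ω) :
      dist (φ k ω) (φ' k ω) = ‖η • ∑ e ∈ Finset.range E, g k e ω‖ := by
    rw [hφ', dist_eq_norm, sub_sub_cancel]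
  have hdist_int (k : ι) : Integrable (fun ω ↦ dist (φ k ω) (φ' k ω)) μ := by
    simpa only [hdist, Pi.smul_apply] using ((integrable_finsetSum _ (hg_int' k)).smul η).norm
  have hdist_le (k : ι) : ∫ ω, dist (φ k ω) (φ' k ω) ∂μ ≤ η * (E * G) := by
    simpa only [hdist, Finset.card_range, Real.norm_of_nonneg hη] using
      integral_norm_smul_sum_le η (hg_int' k)
        fun e he ↦ hg_norm k e (Finset.mem_range.mp he)
  simpa only [mul_assoc] using integral_localLoss_le_of_integral_dist_le hlip hn hn_sum hdist_int
    (by positivity) hdist_le hlam hu hu' hq hq' hℓ_int hℓ'_int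

end ExpectedLoss

/-- Lemma 2: bound on the increase of the expected local loss caused by server-side
prototype aggregation. Each `h k` is `κ`-Lipschitz, the weights `n k ≥ 0` sum to at most
`1`, each client `k` performs `E` stochastic gradient steps with learning rate `η` and
stochastic gradients of expected norm at most `G`, `u, u'` are the gaps introduced by the
quality-detection mechanism (with `λ‖u‖ ≤ ε`, `λ‖u'‖ ≤ ε` a.s.), the global prototypes are
`Pg = ∑ k n k • h k (φ k) − u` and `Pg' = ∑ k n k • h k (φ' k) − u'`, and the local losses
are `ℓ(ω) = ℓ_d(ω) + λ‖P ω − Pg‖` and `ℓ'(ω) = ℓ_d(ω) + λ‖P ω − Pg'‖`. Then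
`E[ℓ'(ω)] ≤ E[ℓ(ω)] + λ κ η E G + 2ε`. -/
theorem lemma2_prototype_aggregation_bound
    (K E : ℕ) (hK : 0 < K) (hE : 0 < E)
    (η : ℝ) (hη : 0 < η) (G : ℝ) (hG : 0 ≤ G) (κ : ℝ) (hκ : 0 ≤ κ)
    (lam : ℝ) (hlam : 0 ≤ lam) (ε : ℝ) (hε : 0 ≤ ε)
    (m : ℕ) (d : Fin K → ℕ) (dw : ℕ)
    (h : ∀ k : Fin K, EuclideanSpace ℝ (Fin (d k)) → EuclideanSpace ℝ (Fin m))
    (hlip : ∀ k, ∀ a b, ‖h k a - h k b‖ ≤ κ * ‖a - b‖)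
    (n : Fin K → ℝ) (hn : ∀ k, 0 ≤ n k) (hn_sum : ∑ k, n k ≤ 1)
    {Ω : Type*} [MeasurableSpace Ω] (μ : Measure Ω) [IsProbabilityMeasure μ]
    (φ : ∀ k : Fin K, Ω → EuclideanSpace ℝ (Fin (d k)))
    (hφ_meas : ∀ k, AEStronglyMeasurable (φ k) μ)
    (g : ∀ k : Fin K, ℕ → Ω → EuclideanSpace ℝ (Fin (d k)))
    (hg_int : ∀ k, ∀ e, e < E → Integrable (g k e) μ)
    (hg_norm : ∀ k, ∀ e, e < E → ∫ ω, ‖g k e ω‖ ∂μ ≤ G)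
    (φ' : ∀ k : Fin K, Ω → EuclideanSpace ℝ (Fin (d k)))
    (hφ' : ∀ k ω, φ' k ω = φ k ω - η • ∑ e ∈ Finset.range E, g k e ω)
    (u u' : Ω → EuclideanSpace ℝ (Fin m))
    (hu_meas : AEStronglyMeasurable u μ) (hu'_meas : AEStronglyMeasurable u' μ)
    (hu : ∀ᵐ ω ∂μ, lam * ‖u ω‖ ≤ ε) (hu' : ∀ᵐ ω ∂μ, lam * ‖u' ω‖ ≤ ε)
    (Pg Pg' : Ω → EuclideanSpace ℝ (Fin m))
    (hPg : ∀ ω, Pg ω = (∑ k, n k • h k (φ k ω)) - u ω)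
    (hPg' : ∀ ω, Pg' ω = (∑ k, n k • h k (φ' k ω)) - u' ω)
    (ℓd : EuclideanSpace ℝ (Fin dw) → ℝ)
    (P : EuclideanSpace ℝ (Fin dw) → EuclideanSpace ℝ (Fin m))
    (hℓd_meas : Measurable ℓd) (hP_meas : Measurable P)
    (w : Ω → EuclideanSpace ℝ (Fin dw))
    (hw_meas : AEStronglyMeasurable w μ)
    (hℓ_int : Integrable (fun ω => ℓd (w ω) + lam * ‖P (w ω) - Pg ω‖) μ)
    (hℓ'_int : Integrable (fun ω => ℓd (w ω) + lam * ‖P (w ω) - Pg' ω‖) μ) :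
    ∫ ω, (ℓd (w ω) + lam * ‖P (w ω) - Pg' ω‖) ∂μ ≤
      (∫ ω, (ℓd (w ω) + lam * ‖P (w ω) - Pg ω‖) ∂μ) + lam * κ * η * E * G + 2 * ε := by
  lift κ to NNReal using hκ
  have hlipschitz (k : Fin K) : LipschitzWith κ (h k) :=
    .of_dist_le_mul fun a b ↦ by simpa only [dist_eq_norm] using hlip k a b
  exact lemma2_prototype_aggregation_bound_general hlipschitz hn hn_sum hη.le hG hg_int hg_norm
    hφ' hlam hu hu' hPg hPg' hℓ_int hℓ'_int
end

section
/- (Theorem 1) Let K and E be positive integers, η > 0, L_a ≥ 0, σ² ≥ 0, G ≥ 0, κ ≥ 0, λ ≥ 0, ε ≥ 0. Fix a client index k. Let ℓ_d : ℝ^d → ℝ and P : ℝ^d → ℝ^m be measurable, let 𝒫 ∈ ℝ^m be a fixed global prototype, and suppose the local loss ℓ(ω) = ℓ_d(ω) + λ‖P(ω) − 𝒫‖ is differentiable with L_a-Lipschitz gradient. On a probability space with filtration (ℱ_e)_{e=0,…,E}, let ω_0 ∈ ℝ^d be deterministic and define ω_{e+1} = ω_e − η g_e for e = 0, …, E−1,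 where each g_e is ℱ_{e+1}-measurable, E[g_e | ℱ_e] = ∇ℓ(ω_e) a.s., E[‖g_e − ∇ℓ(ω_e)‖² | ℱ_e] ≤ σ² a.s., and E[‖g_e‖] ≤ G. Further, for each client index j = 1, …, K let h_j : ℝ^d → ℝ^m be a κ-Lipschitz map and n_j ≥ 0 weights with ∑_j n_j ≤ 1; let each client j run the same kind of E gradient steps ω_j' = ω_j − η ∑_{e=0}^{E−1} g_{j,e} with E[‖g_{j,e}‖] ≤ G (with ω_k = ω_0, ω_k' = ω_E); let u, u' be random vectors with λ‖u‖ ≤ ε and λ‖u'‖ ≤ ε a.s., and suppose 𝒫 = ∑_j n_j h_j(ω_j) − u and define the new global prototype 𝒫' = ∑_j n_j h_j(ω_j') − u' and the new local loss ℓ'(ω) = ℓ_d(ω) + λ‖P(ω) − 𝒫'‖. Assuming all quantities below are integrable, E[ℓ'(ω_E)] ≤ ℓ(ω_0) − (η − L_a η²/2) ∑_{e=0}^{E−1} E[‖∇ℓ(ω_e)‖²] + (L_a E η²/2) σ² + λ κ η E G + 2ε. -/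
open MeasureTheory

/-!
A gradient step along a conditionally unbiased estimate `g` of `v = ∇ℓ(w)` decreases the expected
loss by `(η - Lη²/2) E‖v‖²` up to `Lη²σ²/2`: take expectations in the descent lemma, using
`E⟪v, g⟫ = E‖v‖²` and `E‖g‖² = E‖v‖² + E‖g - v‖²`, both instances of the orthogonality of
`g - E[g|m]` to `m`-measurable vectors. Summing over the local steps bounds the loss against the old
prototype. Replacing the prototype costs at most `λ` times its displacement, which splits into the
two gaps and a weighted average of the clients' displacements, each of expected length at most
`ηEG`.
-/

section

open scoped NNReal InnerProductSpace

section DescentLemma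

variable {H : Type*} [NormedAddCommGroup H] [InnerProductSpace ℝ H] [CompleteSpace H]
  {f : H → ℝ} {L : ℝ≥0}

lemma inner_gradient_add_smul_sub_le (hL : LipschitzWith L (gradient f)) (x v : H) {t : ℝ}
    (ht : 0 ≤ t) : ⟪gradient f (x + t • v), v⟫_ℝ ≤ ⟪gradient f x, v⟫_ℝ + L * ‖v‖ ^ 2 * t := by
  rw [← sub_le_iff_le_add', ← inner_sub_left]
  calc ⟪gradient f (x + t • v) - gradient f x, v⟫_ℝ
      ≤ ‖gradient f (x + t • v) - gradient f x‖ * ‖v‖ := real_inner_le_norm _ _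
    _ ≤ L * ‖x + t • v - x‖ * ‖v‖ := by gcongr; exact hL.norm_sub_le _ _
    _ = L * ‖v‖ ^ 2 * t := by
      rw [add_sub_cancel_left, norm_smul, Real.norm_of_nonneg ht]
      ring

lemma le_add_inner_gradient_add_sq (hf : Differentiable ℝ f) (hL : LipschitzWith L (gradient f))
    (x v : H) : f (x + v) ≤ f x + ⟪gradient f x, v⟫_ℝ + L / 2 * ‖v‖ ^ 2 := by
  have hline (t : ℝ) : HasDerivAt (fun t : ℝ ↦ f (x + t • v)) ⟪gradient f (x + t • v), v⟫_ℝ t := by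
    have hpath : HasDerivAt (fun t : ℝ ↦ x + t • v) v t := by
      simpa using ((hasDerivAt_id t).smul_const v).const_add x
    rw [inner_gradient_left]
    exact (hf _).hasFDerivAt.comp_hasDerivAt t hpath
  have hquad (t : ℝ) : HasDerivAt
      (fun t : ℝ ↦ f x + t * ⟪gradient f x, v⟫_ℝ + L / 2 * ‖v‖ ^ 2 * t ^ 2)
      (⟪gradient f x, v⟫_ℝ + L * ‖v‖ ^ 2 * t) t := by
    refine ((((hasDerivAt_id t).mul_const _).const_add (f x)).add
      ((hasDerivAt_pow 2 t).const_mul (L / 2 * ‖v‖ ^ 2))).congr_deriv ?_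
    push_cast
    ring
  have hle := image_le_of_deriv_right_le_deriv_boundary (a := 0) (b := 1)
    (fun t _ ↦ (hline t).continuousAt.continuousWithinAt) (fun t _ ↦ (hline t).hasDerivWithinAt)
    (by simp) (fun t _ ↦ (hquad t).continuousAt.continuousWithinAt)
    (fun t _ ↦ (hquad t).hasDerivWithinAt)
    (fun t ht ↦ inner_gradient_add_smul_sub_le hL x v ht.1) (Set.right_mem_Icc.2 zero_le_one)
  simpa using hle

end DescentLemma

section UnbiasedEstimator

variable {Ω H : Type*} [NormedAddCommGroup H] [InnerProductSpace ℝ H] {m m0 : MeasurableSpace Ω}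
  {μ : Measure Ω} {f g v : Ω → H} {σ2 : ℝ}

lemma integral_inner_condExp [CompleteSpace H] (hm : m ≤ m0) [SigmaFinite (μ.trim hm)]
    (hf : AEStronglyMeasurable[m] f μ) (hfg : Integrable (fun s ↦ ⟪f s, g s⟫_ℝ) μ)
    (hg : Integrable g μ) : ∫ s, ⟪f s, (μ[g | m]) s⟫_ℝ ∂μ = ∫ s, ⟪f s, g s⟫_ℝ ∂μ := by
  rw [← integral_condExp hm (f := fun s ↦ ⟪f s, g s⟫_ℝ)]
  exact integral_congr_ae
    (condExp_bilin_of_aestronglyMeasurable_left (innerSL ℝ) hf hfg hg).symm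

/-- `g` is an unbiased estimator of `v` given `m`, with conditional variance at most `σ2`: the
stochastic gradient oracle, for `v` the gradient at the current iterate and `m` the past.
Square-integrability is included because the conditional expectation of a non-integrable function
is `0` by convention. -/
structure IsUnbiasedEstimator (m : MeasurableSpace Ω) {m0 : MeasurableSpace Ω} (μ : Measure Ω)
    (v g : Ω → H) (σ2 : ℝ) : Prop where
  memLp : MemLp g 2 μ
  condExp_ae_eq : μ[g | m] =ᵐ[μ] v
  condVar_le : ∀ᵐ s ∂μ, (μ[fun s' ↦ ‖g s' - v s'‖ ^ 2 | m]) s ≤ σ2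

namespace IsUnbiasedEstimator

lemma integral_norm_sub_sq_le [IsProbabilityMeasure μ] (h : IsUnbiasedEstimator m μ v g σ2)
    (hm : m ≤ m0) : ∫ s, ‖g s - v s‖ ^ 2 ∂μ ≤ σ2 := by
  rw [← integral_condExp hm]
  simpa using integral_mono_ae integrable_condExp (integrable_const σ2) h.condVar_le

variable [CompleteSpace H]

lemma of_integrable (hg : Integrable g μ) (hgv : Integrable (fun s ↦ ‖g s - v s‖ ^ 2) μ)
    (hv : Integrable (fun s ↦ ‖v s‖ ^ 2) μ) (hmean : μ[g | m] =ᵐ[μ] v)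
    (hvar : ∀ᵐ s ∂μ, (μ[fun s' ↦ ‖g s' - v s'‖ ^ 2 | m]) s ≤ σ2) :
    IsUnbiasedEstimator m μ v g σ2 where
  memLp := by
    have hv_meas : AEStronglyMeasurable v μ := integrable_condExp.aestronglyMeasurable.congr hmean
    have hgv_memLp : MemLp (g - v) 2 μ :=
      (memLp_two_iff_integrable_sq_norm (hg.aestronglyMeasurable.sub hv_meas)).2 hgv
    simpa using hgv_memLp.add ((memLp_two_iff_integrable_sq_norm hv_meas).2 hv)
  condExp_ae_eq := hmean
  condVar_le := hvar

lemma memLp_target (h : IsUnbiasedEstimator m μ v g σ2) : MemLp v 2 μ :=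
  (h.memLp.condExp one_le_two).ae_eq h.condExp_ae_eq

lemma integrable_inner (h : IsUnbiasedEstimator m μ v g σ2) :
    Integrable (fun s ↦ ⟪v s, g s⟫_ℝ) μ :=
  memLp_one_iff_integrable.1 ((innerSL ℝ).memLp_of_bilin 1 h.memLp_target h.memLp)

lemma integral_inner [IsFiniteMeasure μ] (h : IsUnbiasedEstimator m μ v g σ2) (hm : m ≤ m0) :
    ∫ s, ⟪v s, g s⟫_ℝ ∂μ = ∫ s, ‖v s‖ ^ 2 ∂μ := by
  have hv : AEStronglyMeasurable[m] v μ :=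
    stronglyMeasurable_condExp.aestronglyMeasurable.congr h.condExp_ae_eq
  rw [← integral_inner_condExp hm hv h.integrable_inner (h.memLp.integrable one_le_two)]
  refine integral_congr_ae ?_
  filter_upwards [h.condExp_ae_eq] with s hs
  rw [hs, real_inner_self_eq_norm_sq]

lemma integral_norm_sq_le [IsProbabilityMeasure μ] (h : IsUnbiasedEstimator m μ v g σ2)
    (hm : m ≤ m0) : ∫ s, ‖g s‖ ^ 2 ∂μ ≤ ∫ s, ‖v s‖ ^ 2 ∂μ + σ2 := by
  have hv := h.memLp_target.integrable_norm_pow two_ne_zero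
  have hgv : Integrable (fun s ↦ ‖g s - v s‖ ^ 2) μ :=
    (h.memLp.sub h.memLp_target).integrable_norm_pow two_ne_zero
  have hinner := h.integrable_inner.const_mul 2
  have hpolar (s : Ω) : ‖g s‖ ^ 2 = 2 * ⟪v s, g s⟫_ℝ - ‖v s‖ ^ 2 + ‖g s - v s‖ ^ 2 := by
    rw [norm_sub_sq_real, real_inner_comm]
    ring
  calc ∫ s, ‖g s‖ ^ 2 ∂μ
      = 2 * ∫ s, ⟪v s, g s⟫_ℝ ∂μ - ∫ s, ‖v s‖ ^ 2 ∂μ + ∫ s, ‖g s - v s‖ ^ 2 ∂μ := by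
        simp_rw [hpolar]
        rw [integral_add (by exact hinner.sub hv) hgv, integral_sub hinner hv, integral_const_mul]
    _ ≤ ∫ s, ‖v s‖ ^ 2 ∂μ + σ2 := by
        linarith [h.integral_inner hm, h.integral_norm_sub_sq_le hm]

end IsUnbiasedEstimator

end UnbiasedEstimator

section StochasticGradientDescent

variable {Ω H : Type*} [NormedAddCommGroup H] [InnerProductSpace ℝ H] [CompleteSpace H]
  {m0 : MeasurableSpace Ω} {μ : Measure Ω} [IsProbabilityMeasure μ]
  {f : H → ℝ} {L : ℝ≥0} {η σ2 : ℝ}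

lemma integral_gradient_step_le {m : MeasurableSpace Ω} {x g : Ω → H} (hf : Differentiable ℝ f)
    (hL : LipschitzWith L (gradient f)) (hm : m ≤ m0)
    (hg : IsUnbiasedEstimator m μ (fun s ↦ gradient f (x s)) g σ2)
    (hx : Integrable (fun s ↦ f (x s)) μ) (hx' : Integrable (fun s ↦ f (x s - η • g s)) μ) :
    ∫ s, f (x s - η • g s) ∂μ ≤ ∫ s, f (x s) ∂μ
      - ((η - L * η ^ 2 / 2) * ∫ s, ‖gradient f (x s)‖ ^ 2 ∂μ - L * η ^ 2 / 2 * σ2) := by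
  have hinner := hg.integrable_inner.const_mul η
  have hsq := (hg.memLp.integrable_norm_pow two_ne_zero).const_mul (L * η ^ 2 / 2)
  have hdescent (s : Ω) : f (x s - η • g s) ≤
      f (x s) - η * ⟪gradient f (x s), g s⟫_ℝ + L * η ^ 2 / 2 * ‖g s‖ ^ 2 := by
    have h := le_add_inner_gradient_add_sq hf hL (x s) (-(η • g s))
    rw [← sub_eq_add_neg, inner_neg_right, inner_smul_right, norm_neg, norm_smul, mul_pow,
      Real.norm_eq_abs, sq_abs] at h
    linarith
  calc ∫ s, f (x s - η • g s) ∂μ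
      ≤ ∫ s, (f (x s) - η * ⟪gradient f (x s), g s⟫_ℝ + L * η ^ 2 / 2 * ‖g s‖ ^ 2) ∂μ :=
        integral_mono hx' ((hx.sub hinner).add hsq) hdescent
    _ = ∫ s, f (x s) ∂μ - η * ∫ s, ‖gradient f (x s)‖ ^ 2 ∂μ
          + L * η ^ 2 / 2 * ∫ s, ‖g s‖ ^ 2 ∂μ := by
        rw [integral_add (by exact hx.sub hinner) hsq, integral_sub hx hinner, integral_const_mul,
          integral_const_mul, hg.integral_inner hm]
    _ ≤ ∫ s, f (x s) ∂μ - η * ∫ s, ‖gradient f (x s)‖ ^ 2 ∂μ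
          + L * η ^ 2 / 2 * (∫ s, ‖gradient f (x s)‖ ^ 2 ∂μ + σ2) := by
        gcongr
        exact hg.integral_norm_sq_le hm
    _ = _ := by ring

lemma integral_sgd_le {m : ℕ → MeasurableSpace Ω} {w g : ℕ → Ω → H} {E : ℕ}
    (hf : Differentiable ℝ f) (hL : LipschitzWith L (gradient f)) (hm : ∀ e < E, m e ≤ m0)
    (hw : ∀ e < E, ∀ s, w (e + 1) s = w e s - η • g e s)
    (hg : ∀ e < E, IsUnbiasedEstimator (m e) μ (fun s ↦ gradient f (w e s)) (g e) σ2)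
    (hfw : ∀ e ≤ E, Integrable (fun s ↦ f (w e s)) μ) :
    ∫ s, f (w E s) ∂μ ≤ ∫ s, f (w 0 s) ∂μ
      - (η - L * η ^ 2 / 2) * ∑ e ∈ Finset.range E, ∫ s, ‖gradient f (w e s)‖ ^ 2 ∂μ
      + L * E * η ^ 2 / 2 * σ2 := by
  have hstep (e : ℕ) (he : e ∈ Finset.range E) :
      ∫ s, f (w (e + 1) s) ∂μ - ∫ s, f (w e s) ∂μ ≤
        L * η ^ 2 / 2 * σ2 - (η - L * η ^ 2 / 2) * ∫ s, ‖gradient f (w e s)‖ ^ 2 ∂μ := by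
    rw [Finset.mem_range] at he
    have hnext := hfw (e + 1) he
    simp only [hw e he] at hnext ⊢
    linarith [integral_gradient_step_le hf hL (hm e he) (hg e he) (hfw e he.le) hnext]
  have hsum := Finset.sum_le_sum hstep
  rw [Finset.sum_range_sub fun e ↦ ∫ s, f (w e s) ∂μ, Finset.sum_sub_distrib, Finset.sum_const,
    Finset.card_range, nsmul_eq_mul, ← Finset.mul_sum] at hsum
  linarith

end StochasticGradientDescent

section PrototypeAggregation

variable {ι X V : Type*} [SeminormedAddCommGroup V]

/-- The prototype-regularized local loss `ℓ_d(x) + λ‖P(x) - p‖` against the global prototype `p`. -/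
def protoLoss (ℓd : X → ℝ) (P : X → V) (lam : ℝ) (p : V) (x : X) : ℝ :=
  ℓd x + lam * ‖P x - p‖

lemma protoLoss_le_add_norm_sub (ℓd : X → ℝ) (P : X → V) {lam : ℝ} (hlam : 0 ≤ lam) (p q : V)
    (x : X) : protoLoss ℓd P lam q x ≤ protoLoss ℓd P lam p x + lam * ‖p - q‖ := by
  simp only [protoLoss, add_assoc, ← mul_add]
  gcongr
  exact norm_sub_le_norm_sub_add_norm_sub _ _ _

variable [Fintype ι] [NormedSpace ℝ V]

/-- Server-side aggregation: the weighted sum of the clients' representations `h j (x j)`. -/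
def aggregate (n : ι → ℝ) (h : ι → X → V) (x : ι → X) : V :=
  ∑ j, n j • h j (x j)

variable [SeminormedAddCommGroup X] {n : ι → ℝ} {h : ι → X → V} {κ : ℝ≥0}

lemma norm_aggregate_sub_le (hn : ∀ j, 0 ≤ n j) (hh : ∀ j, LipschitzWith κ (h j)) (x y : ι → X) :
    ‖aggregate n h x - aggregate n h y‖ ≤ κ * ∑ j, n j * ‖x j - y j‖ := by
  rw [aggregate, aggregate, ← Finset.sum_sub_distrib, Finset.mul_sum]
  refine norm_sum_le_of_le _ fun j _ ↦ ?_
  calc ‖n j • h j (x j) - n j • h j (y j)‖ = n j * ‖h j (x j) - h j (y j)‖ := by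
        rw [← smul_sub, norm_smul, Real.norm_of_nonneg (hn j)]
    _ ≤ n j * (κ * ‖x j - y j‖) :=
        mul_le_mul_of_nonneg_left ((hh j).norm_sub_le _ _) (hn j)
    _ = κ * (n j * ‖x j - y j‖) := by ring

lemma protoLoss_aggregate_le (ℓd : X → ℝ) (P : X → V) {lam ε : ℝ} (hlam : 0 ≤ lam)
    (hn : ∀ j, 0 ≤ n j) (hh : ∀ j, LipschitzWith κ (h j)) (x y : ι → X) {u u' : V}
    (hu : lam * ‖u‖ ≤ ε) (hu' : lam * ‖u'‖ ≤ ε) (z : X) :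
    protoLoss ℓd P lam (aggregate n h y - u') z ≤
      protoLoss ℓd P lam (aggregate n h x - u) z + lam * κ * ∑ j, n j * ‖x j - y j‖ + 2 * ε := by
  have hshift : ‖(aggregate n h x - u) - (aggregate n h y - u')‖ ≤
      κ * ∑ j, n j * ‖x j - y j‖ + (‖u‖ + ‖u'‖) := by
    rw [sub_sub_sub_comm]
    exact (norm_sub_le _ _).trans
      (add_le_add (norm_aggregate_sub_le hn hh x y) (norm_sub_le u u'))
  have hcost := protoLoss_le_add_norm_sub ℓd P hlam (aggregate n h x - u) (aggregate n h y - u') z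
  linarith [mul_le_mul_of_nonneg_left hshift hlam]

lemma integral_protoLoss_aggregate_le {Ω : Type*} {m0 : MeasurableSpace Ω} {μ : Measure Ω}
    [IsProbabilityMeasure μ] {ℓd : X → ℝ} {P : X → V} {lam ε : ℝ} (hlam : 0 ≤ lam)
    (hn : ∀ j, 0 ≤ n j) (hh : ∀ j, LipschitzWith κ (h j)) {x y : ι → Ω → X}
    (hxy : ∀ j, Integrable (fun s ↦ ‖x j s - y j s‖) μ)
    {u u' p p' : Ω → V} (hu : ∀ᵐ s ∂μ, lam * ‖u s‖ ≤ ε) (hu' : ∀ᵐ s ∂μ, lam * ‖u' s‖ ≤ ε)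
    (hp : ∀ s, p s = aggregate n h (x · s) - u s) (hp' : ∀ s, p' s = aggregate n h (y · s) - u' s)
    {z : Ω → X} (hp_int : Integrable (fun s ↦ protoLoss ℓd P lam (p s) (z s)) μ)
    (hp'_int : Integrable (fun s ↦ protoLoss ℓd P lam (p' s) (z s)) μ) :
    ∫ s, protoLoss ℓd P lam (p' s) (z s) ∂μ ≤ ∫ s, protoLoss ℓd P lam (p s) (z s) ∂μ
      + lam * κ * ∫ s, ∑ j, n j * ‖x j s - y j s‖ ∂μ + 2 * ε := by
  have hshift_int : Integrable (fun s ↦ lam * κ * ∑ j, n j * ‖x j s - y j s‖) μ :=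
    (integrable_finsetSum _ fun j _ ↦ (hxy j).const_mul (n j)).const_mul (lam * κ)
  have hpointwise : ∀ᵐ s ∂μ, protoLoss ℓd P lam (p' s) (z s) ≤
      protoLoss ℓd P lam (p s) (z s) + lam * κ * ∑ j, n j * ‖x j s - y j s‖ + 2 * ε := by
    filter_upwards [hu, hu'] with s hus hus'
    rw [hp s, hp' s]
    exact protoLoss_aggregate_le ℓd P hlam hn hh (x · s) (y · s) hus hus' (z s)
  calc ∫ s, protoLoss ℓd P lam (p' s) (z s) ∂μ
      ≤ ∫ s, (protoLoss ℓd P lam (p s) (z s) + lam * κ * ∑ j, n j * ‖x j s - y j s‖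
          + 2 * ε) ∂μ :=
        integral_mono_ae hp'_int ((hp_int.add hshift_int).add (integrable_const _)) hpointwise
    _ = _ := by
        rw [integral_add (by exact hp_int.add hshift_int) (integrable_const _),
          integral_add hp_int hshift_int, integral_const_mul, integral_const, probReal_univ,
          one_smul]

end PrototypeAggregation

section ClientDrift

variable {Ω : Type*} {m0 : MeasurableSpace Ω} {μ : Measure Ω} {C : ℝ}

lemma integral_norm_sum_le {ι V : Type*} [NormedAddCommGroup V] {t : Finset ι} {X : ι → Ω → V}
    (hX : ∀ i ∈ t, Integrable (X i) μ) (hC : ∀ i ∈ t, ∫ s, ‖X i s‖ ∂μ ≤ C) :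
    ∫ s, ‖∑ i ∈ t, X i s‖ ∂μ ≤ t.card * C :=
  calc ∫ s, ‖∑ i ∈ t, X i s‖ ∂μ ≤ ∫ s, ∑ i ∈ t, ‖X i s‖ ∂μ :=
        integral_mono (integrable_finsetSum t hX).norm
          (integrable_finsetSum t fun i hi ↦ (hX i hi).norm) fun _ ↦ norm_sum_le _ _
    _ = ∑ i ∈ t, ∫ s, ‖X i s‖ ∂μ := integral_finsetSum t fun i hi ↦ (hX i hi).norm
    _ ≤ t.card * C := by simpa using Finset.sum_le_card_nsmul t _ C hC

section LocalSteps

variable {V : Type*} [NormedAddCommGroup V] [NormedSpace ℝ V] {E : ℕ} {η : ℝ}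
  {g : ℕ → Ω → V} {x x' : Ω → V}

lemma integrable_norm_sub_of_steps (hg : ∀ e < E, Integrable (g e) μ)
    (hx' : ∀ s, x' s = x s - η • ∑ e ∈ Finset.range E, g e s) :
    Integrable (fun s ↦ ‖x s - x' s‖) μ := by
  simp_rw [hx', sub_sub_cancel]
  exact ((integrable_finsetSum _ fun e he ↦ hg e (Finset.mem_range.1 he)).smul η).norm

lemma integral_norm_sub_le_of_steps (hη : 0 ≤ η) (hg : ∀ e < E, Integrable (g e) μ)
    (hC : ∀ e < E, ∫ s, ‖g e s‖ ∂μ ≤ C)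
    (hx' : ∀ s, x' s = x s - η • ∑ e ∈ Finset.range E, g e s) :
    ∫ s, ‖x s - x' s‖ ∂μ ≤ η * (E * C) := by
  simp_rw [hx', sub_sub_cancel, norm_smul, Real.norm_of_nonneg hη, integral_const_mul]
  gcongr
  simpa using integral_norm_sum_le (fun e he ↦ hg e (Finset.mem_range.1 he))
    (fun e he ↦ hC e (Finset.mem_range.1 he))

end LocalSteps

lemma integral_weighted_sum_le {ι : Type*} [Fintype ι] {n : ι → ℝ} {X : ι → Ω → ℝ}
    (hn : ∀ j, 0 ≤ n j) (hn_sum : ∑ j, n j ≤ 1) (hX : ∀ j, Integrable (X j) μ) (hC0 : 0 ≤ C)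
    (hC : ∀ j, ∫ s, X j s ∂μ ≤ C) : ∫ s, ∑ j, n j * X j s ∂μ ≤ C :=
  calc ∫ s, ∑ j, n j * X j s ∂μ = ∑ j, n j * ∫ s, X j s ∂μ := by
        rw [integral_finsetSum _ fun j _ ↦ (hX j).const_mul (n j)]
        simp_rw [integral_const_mul]
    _ ≤ ∑ j, n j * C := Finset.sum_le_sum fun j _ ↦ mul_le_mul_of_nonneg_left (hC j) (hn j)
    _ = (∑ j, n j) * C := (Finset.sum_mul _ _ _).symm
    _ ≤ C := mul_le_of_le_one_left hC0 hn_sum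

end ClientDrift

theorem theorem1_one_round_loss_bound_general
    {ι Ω H V : Type*} [Fintype ι] [NormedAddCommGroup H] [InnerProductSpace ℝ H] [CompleteSpace H]
    [SeminormedAddCommGroup V] [NormedSpace ℝ V]
    {m0 : MeasurableSpace Ω} {μ : Measure Ω} [IsProbabilityMeasure μ]
    {E : ℕ} {η lam ε σ2 G : ℝ} {L κ : ℝ≥0} (hη : 0 ≤ η) (hlam : 0 ≤ lam) (hG : 0 ≤ G)
    {ℓd : H → ℝ} {P : H → V} {p : V}
    (hdiff : Differentiable ℝ (protoLoss ℓd P lam p))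
    (hL : LipschitzWith L (gradient (protoLoss ℓd P lam p)))
    {m : ℕ → MeasurableSpace Ω} (hm : ∀ e < E, m e ≤ m0) {w g : ℕ → Ω → H}
    (hw : ∀ e < E, ∀ s, w (e + 1) s = w e s - η • g e s)
    (hg : ∀ e < E, IsUnbiasedEstimator (m e) μ
      (fun s ↦ gradient (protoLoss ℓd P lam p) (w e s)) (g e) σ2)
    (hw_int : ∀ e ≤ E, Integrable (fun s ↦ protoLoss ℓd P lam p (w e s)) μ)
    {h : ι → H → V} (hh : ∀ j, LipschitzWith κ (h j))
    {n : ι → ℝ} (hn : ∀ j, 0 ≤ n j) (hn_sum : ∑ j, n j ≤ 1)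
    {φ φ' : ι → Ω → H} {gj : ι → ℕ → Ω → H}
    (hgj_int : ∀ j, ∀ e < E, Integrable (gj j e) μ)
    (hgj_norm : ∀ j, ∀ e < E, ∫ s, ‖gj j e s‖ ∂μ ≤ G)
    (hφ' : ∀ j s, φ' j s = φ j s - η • ∑ e ∈ Finset.range E, gj j e s)
    {u u' : Ω → V} (hu : ∀ᵐ s ∂μ, lam * ‖u s‖ ≤ ε) (hu' : ∀ᵐ s ∂μ, lam * ‖u' s‖ ≤ ε)
    (hp : ∀ s, p = aggregate n h (φ · s) - u s)
    {p' : Ω → V} (hp' : ∀ s, p' s = aggregate n h (φ' · s) - u' s)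
    (hp'_int : Integrable (fun s ↦ protoLoss ℓd P lam (p' s) (w E s)) μ) :
    ∫ s, protoLoss ℓd P lam (p' s) (w E s) ∂μ ≤
      ∫ s, protoLoss ℓd P lam p (w 0 s) ∂μ
        - (η - L * η ^ 2 / 2) *
            ∑ e ∈ Finset.range E, ∫ s, ‖gradient (protoLoss ℓd P lam p) (w e s)‖ ^ 2 ∂μ
        + L * E * η ^ 2 / 2 * σ2
        + lam * κ * η * E * G + 2 * ε := by
  have hdrift_int (j : ι) : Integrable (fun s ↦ ‖φ j s - φ' j s‖) μ :=
    integrable_norm_sub_of_steps (hgj_int j) (hφ' j)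
  have hdrift_le : ∫ s, ∑ j, n j * ‖φ j s - φ' j s‖ ∂μ ≤ η * (E * G) :=
    integral_weighted_sum_le hn hn_sum hdrift_int (by positivity)
      fun j ↦ integral_norm_sub_le_of_steps hη (hgj_int j) (hgj_norm j) (hφ' j)
  have haggregate := integral_protoLoss_aggregate_le hlam hn hh hdrift_int hu hu' hp hp'
    (hw_int E le_rfl) hp'_int
  have hlocal := integral_sgd_le hdiff hL hm hw hg hw_int
  linarith [mul_le_mul_of_nonneg_left hdrift_le (mul_nonneg hlam κ.coe_nonneg)]

end

/-- Theorem 1: upper bound on the expected local loss of client `k` after one full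
communication round of FedRFQ (E local SGD steps followed by server-side prototype
aggregation with the BFT-detect quality-detection gaps `u`, `u'`):
`E[ℓ'(ω_E)] ≤ ℓ(ω_0) − (η − L_a η²/2) ∑_{e<E} E[‖∇ℓ(ω_e)‖²] + (L_a E η²/2)σ²
  + λκηEG + 2ε`. -/
theorem theorem1_one_round_loss_bound
    (K E : ℕ) (hK : 0 < K) (hE : 0 < E)
    (η : ℝ) (hη : 0 < η) (La : ℝ) (hLa : 0 ≤ La) (σ2 : ℝ) (hσ2 : 0 ≤ σ2)
    (G : ℝ) (hG : 0 ≤ G) (κ : ℝ) (hκ : 0 ≤ κ)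
    (lam : ℝ) (hlam : 0 ≤ lam) (ε : ℝ) (hε : 0 ≤ ε)
    (d m : ℕ) (k : Fin K)
    (ℓd : EuclideanSpace ℝ (Fin d) → ℝ) (hℓd_meas : Measurable ℓd)
    (P : EuclideanSpace ℝ (Fin d) → EuclideanSpace ℝ (Fin m)) (hP_meas : Measurable P)
    (PgOld : EuclideanSpace ℝ (Fin m))
    (ℓ : EuclideanSpace ℝ (Fin d) → ℝ)
    (hℓ : ∀ x, ℓ x = ℓd x + lam * ‖P x - PgOld‖)
    (hℓ_diff : Differentiable ℝ ℓ)
    (hℓ_lip : ∀ x y, ‖gradient ℓ x - gradient ℓ y‖ ≤ La * ‖x - y‖)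
    {Ω : Type*} {m0 : MeasurableSpace Ω} (μ : Measure Ω) [IsProbabilityMeasure μ]
    (ℱ : Filtration ℕ m0)
    (w0 : EuclideanSpace ℝ (Fin d))
    (w : ℕ → Ω → EuclideanSpace ℝ (Fin d))
    (hw0 : ∀ s, w 0 s = w0)
    (g : ℕ → Ω → EuclideanSpace ℝ (Fin d))
    (hupdate : ∀ e, e < E → ∀ s, w (e + 1) s = w e s - η • g e s)
    (hg_meas : ∀ e, e < E → StronglyMeasurable[ℱ (e + 1)] (g e))
    (hg_mean : ∀ e, e < E → μ[g e | ℱ e] =ᵐ[μ] fun s => gradient ℓ (w e s))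
    (hg_var : ∀ e, e < E →
      ∀ᵐ s ∂μ, (μ[fun s' => ‖g e s' - gradient ℓ (w e s')‖ ^ 2 | ℱ e]) s ≤ σ2)
    (hg_norm : ∀ e, e < E → ∫ s, ‖g e s‖ ∂μ ≤ G)
    (hg_int : ∀ e, e < E → Integrable (g e) μ)
    (hg_sq_int : ∀ e, e < E → Integrable (fun s => ‖g e s - gradient ℓ (w e s)‖ ^ 2) μ)
    (hℓw_int : ∀ e, e ≤ E → Integrable (fun s => ℓ (w e s)) μ)
    (hgrad_sq_int : ∀ e, e < E → Integrable (fun s => ‖gradient ℓ (w e s)‖ ^ 2) μ)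
    (hj : Fin K → EuclideanSpace ℝ (Fin d) → EuclideanSpace ℝ (Fin m))
    (hj_lip : ∀ j, ∀ a b, ‖hj j a - hj j b‖ ≤ κ * ‖a - b‖)
    (n : Fin K → ℝ) (hn : ∀ j, 0 ≤ n j) (hn_sum : ∑ j, n j ≤ 1)
    (φ φ' : Fin K → Ω → EuclideanSpace ℝ (Fin d))
    (hφ_meas : ∀ j, AEStronglyMeasurable (φ j) μ)
    (gj : Fin K → ℕ → Ω → EuclideanSpace ℝ (Fin d))
    (hgj_int : ∀ j, ∀ e, e < E → Integrable (gj j e) μ)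
    (hgj_norm : ∀ j, ∀ e, e < E → ∫ s, ‖gj j e s‖ ∂μ ≤ G)
    (hφ' : ∀ j s, φ' j s = φ j s - η • ∑ e ∈ Finset.range E, gj j e s)
    (hφk : ∀ s, φ k s = w0)
    (hφ'k : ∀ s, φ' k s = w E s)
    (u u' : Ω → EuclideanSpace ℝ (Fin m))
    (hu_meas : AEStronglyMeasurable u μ) (hu'_meas : AEStronglyMeasurable u' μ)
    (hu : ∀ᵐ s ∂μ, lam * ‖u s‖ ≤ ε) (hu' : ∀ᵐ s ∂μ, lam * ‖u' s‖ ≤ ε)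
    (hPgOld : ∀ s, PgOld = (∑ j, n j • hj j (φ j s)) - u s)
    (Pg' : Ω → EuclideanSpace ℝ (Fin m))
    (hPg' : ∀ s, Pg' s = (∑ j, n j • hj j (φ' j s)) - u' s)
    (hℓ'_int : Integrable (fun s => ℓd (w E s) + lam * ‖P (w E s) - Pg' s‖) μ) :
    ∫ s, (ℓd (w E s) + lam * ‖P (w E s) - Pg' s‖) ∂μ ≤
      ℓ w0
        - (η - La * η ^ 2 / 2) *
            ∑ e ∈ Finset.range E, ∫ s, ‖gradient ℓ (w e s)‖ ^ 2 ∂μ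
        + La * E * η ^ 2 / 2 * σ2
        + lam * κ * η * E * G + 2 * ε := by
  obtain rfl : ℓ = protoLoss ℓd P lam PgOld := funext hℓ
  lift La to NNReal using hLa
  lift κ to NNReal using hκ
  have hgrad (e : ℕ) (he : e < E) := IsUnbiasedEstimator.of_integrable (hg_int e he)
    (hg_sq_int e he) (hgrad_sq_int e he) (hg_mean e he) (hg_var e he)
  simpa [hw0, protoLoss] using theorem1_one_round_loss_bound_general hη.le hlam hG hℓ_diff
    (lipschitzWith_iff_norm_sub_le.2 hℓ_lip) (fun e _ ↦ ℱ.le e) hupdate hgrad hℓw_int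
    (fun j ↦ lipschitzWith_iff_norm_sub_le.2 (hj_lip j)) hn hn_sum hgj_int hgj_norm hφ' hu hu'
    hPgOld hPg' hℓ'_int
end

section
/- Let k̂ ≥ 2 be an integer and set n = k̂². Define the SoftPool output S : ℝ^n → ℝ by S(x) = ∑_{i=1}^n (exp(x_i) / ∑_{j=1}^n exp(x_j)) · x_i. Then for all x, y ∈ ℝ^n, |S(x) − S(y)| ≤ (k̂² − 1) · max_{1 ≤ i ≤ n} |x_i − y_i|; that is, SoftPool is Lipschitz continuous with constant L₂′ = k̂² − 1 with respect to the supremum norm. -/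
open Finset

/-!
Along the segment from `y` to `x` the mean value theorem reduces the claim to a bound on the `ℓ¹`
norm of the gradient `g i = w i * (1 + x i - S x)`, where `w = softmax x`. The entries of `g` sum
to `1`, and none of them is very negative: Jensen's inequality gives `exp (S x) ≤ ∑ j, exp (x j)`,
that is `w i * exp (S x - x i) ≤ 1`, and `u - 1 ≤ exp (u - 2)` at `u = S x - x i` turns this into
`-exp (-2) ≤ g i`. Hence the `ℓ¹` norm is at most `1 + 2 * n * exp (-2)`, and
`6 ≤ exp 2` makes this at most `n - 1` as soon as `3 ≤ n`.
-/

lemma exp_neg_two_le_one_div_six : Real.exp (-2) ≤ 1 / 6 := by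
  have six_le : 6 ≤ Real.exp 2 := by
    rw [← one_add_one_eq_two, Real.exp_add]
    nlinarith [Real.exp_one_gt_d9]
  rw [Real.exp_neg, one_div]
  exact inv_anti₀ (by norm_num) six_le

section Norms

variable {ι : Type*} [Fintype ι]

lemma norm_sum_smul_proj_le (a : ι → ℝ) :
    ‖∑ i, a i • (ContinuousLinearMap.proj i : (ι → ℝ) →L[ℝ] ℝ)‖ ≤ ∑ i, |a i| := by
  refine ContinuousLinearMap.opNorm_le_bound _ (sum_nonneg fun i _ => abs_nonneg (a i)) fun v => ?_
  calc ‖(∑ i, a i • (ContinuousLinearMap.proj i : (ι → ℝ) →L[ℝ] ℝ)) v‖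
      = |∑ i, a i * v i| := by simp
    _ ≤ ∑ i, |a i * v i| := abs_sum_le_sum_abs _ _
    _ ≤ ∑ i, |a i| * ‖v‖ := by
        gcongr with i
        rw [abs_mul]
        gcongr
        exact norm_le_pi_norm v i
    _ = (∑ i, |a i|) * ‖v‖ := (sum_mul _ _ _).symm

lemma pi_norm_eq_sup'_norm {E : ι → Type*} [∀ i, SeminormedAddGroup (E i)]
    (h : (univ : Finset ι).Nonempty) (v : ∀ i, E i) : ‖v‖ = univ.sup' h fun i => ‖v i‖ := by
  have : Nonempty ι := univ_nonempty_iff.1 h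
  exact le_antisymm
    ((pi_norm_le_iff_of_nonempty v).2 fun i => le_sup' (fun i => ‖v i‖) (mem_univ i))
    (sup'_le h _ fun i _ => norm_le_pi_norm v i)

lemma sum_abs_le_sum_add_of_neg_le {a : ι → ℝ} {c : ℝ} (hc : 0 ≤ c) (ha : ∀ i, -c ≤ a i) :
    ∑ i, |a i| ≤ ∑ i, a i + 2 * Fintype.card ι * c := by
  calc ∑ i, |a i| ≤ ∑ i, (a i + 2 * c) :=
        sum_le_sum fun i _ => abs_le.2 ⟨by linarith [ha i], by linarith⟩
    _ = ∑ i, a i + 2 * Fintype.card ι * c := by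
        rw [sum_add_distrib, sum_const, card_univ, nsmul_eq_mul]
        ring

end Norms

section SoftPool

variable {ι : Type*} [Fintype ι]

/-- The softmax weights `W i = exp (x i) / ∑ j, exp (x j)` of the feature values `x`. -/
noncomputable def softmax (x : ι → ℝ) (i : ι) : ℝ :=
  Real.exp (x i) / ∑ j, Real.exp (x j)

/-- The SoftPool output `S(x)`: the mean of the feature values under their softmax weights. -/
noncomputable def softPool (x : ι → ℝ) : ℝ :=
  ∑ i, softmax x i * x i

/-- The gradient of `softPool` at `x`, as a vector of partial derivatives; see
`hasFDerivAt_softPool`. -/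
noncomputable def softPoolGradient (x : ι → ℝ) (i : ι) : ℝ :=
  softmax x i * (1 + x i - softPool x)

lemma sum_exp_pos [Nonempty ι] (x : ι → ℝ) : 0 < ∑ j, Real.exp (x j) :=
  sum_pos (fun j _ => Real.exp_pos (x j)) univ_nonempty

lemma softmax_nonneg (x : ι → ℝ) (i : ι) : 0 ≤ softmax x i := by
  unfold softmax
  positivity

lemma sum_softmax [Nonempty ι] (x : ι → ℝ) : ∑ i, softmax x i = 1 := by
  simp only [softmax, ← sum_div]
  exact div_self (sum_exp_pos x).ne'

lemma softmax_le_one (x : ι → ℝ) (i : ι) : softmax x i ≤ 1 :=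
  have : Nonempty ι := ⟨i⟩
  (single_le_sum (fun j _ => softmax_nonneg x j) (mem_univ i)).trans_eq (sum_softmax x)

lemma softmax_eq_exp_sub_log (x : ι → ℝ) (i : ι) :
    softmax x i = Real.exp (x i - Real.log (∑ j, Real.exp (x j))) := by
  have : Nonempty ι := ⟨i⟩
  rw [Real.exp_sub, Real.exp_log (sum_exp_pos x), softmax]

lemma exp_softPool_le_sum_exp [Nonempty ι] (x : ι → ℝ) :
    Real.exp (softPool x) ≤ ∑ i, Real.exp (x i) :=
  calc Real.exp (softPool x) ≤ ∑ i, softmax x i * Real.exp (x i) :=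
        convexOn_exp.map_sum_le (fun i _ => softmax_nonneg x i) (sum_softmax x)
          fun i _ => Set.mem_univ (x i)
    _ ≤ ∑ i, Real.exp (x i) :=
        sum_le_sum fun i _ => mul_le_of_le_one_left (Real.exp_pos _).le (softmax_le_one x i)

lemma softmax_mul_exp_softPool_sub_le_one (x : ι → ℝ) (i : ι) :
    softmax x i * Real.exp (softPool x - x i) ≤ 1 := by
  have : Nonempty ι := ⟨i⟩
  calc softmax x i * Real.exp (softPool x - x i)
      = Real.exp (softPool x) / ∑ j, Real.exp (x j) := by
        rw [softmax, Real.exp_sub]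
        field_simp
    _ ≤ 1 := div_le_one_of_le₀ (exp_softPool_le_sum_exp x) (sum_exp_pos x).le

lemma neg_exp_neg_two_le_softPoolGradient (x : ι → ℝ) (i : ι) :
    -Real.exp (-2) ≤ softPoolGradient x i := by
  have tangent : softPool x - x i - 1 ≤ Real.exp (softPool x - x i) * Real.exp (-2) := by
    rw [← Real.exp_add]
    linarith [Real.add_one_le_exp (softPool x - x i + -2)]
  suffices softmax x i * (softPool x - x i - 1) ≤ Real.exp (-2) by
    rw [softPoolGradient]
    linarith
  calc softmax x i * (softPool x - x i - 1)
      ≤ softmax x i * (Real.exp (softPool x - x i) * Real.exp (-2)) :=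
        mul_le_mul_of_nonneg_left tangent (softmax_nonneg x i)
    _ = softmax x i * Real.exp (softPool x - x i) * Real.exp (-2) := (mul_assoc _ _ _).symm
    _ ≤ Real.exp (-2) :=
        mul_le_of_le_one_left (Real.exp_pos _).le (softmax_mul_exp_softPool_sub_le_one x i)

lemma sum_softPoolGradient [Nonempty ι] (x : ι → ℝ) : ∑ i, softPoolGradient x i = 1 :=
  calc ∑ i, softPoolGradient x i
      = ∑ i, softmax x i + ∑ i, softmax x i * x i - (∑ i, softmax x i) * softPool x := by
        simp only [softPoolGradient, mul_sub, mul_add, mul_one, sum_sub_distrib, sum_add_distrib,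
          sum_mul]
    _ = 1 := by
        rw [sum_softmax, ← softPool]
        ring

lemma sum_abs_softPoolGradient_le [Nonempty ι] (x : ι → ℝ) :
    ∑ i, |softPoolGradient x i| ≤ 1 + 2 * Fintype.card ι * Real.exp (-2) :=
  sum_softPoolGradient x ▸
    sum_abs_le_sum_add_of_neg_le (Real.exp_pos _).le (neg_exp_neg_two_le_softPoolGradient x)

lemma hasFDerivAt_log_sum_exp [Nonempty ι] (x : ι → ℝ) :
    HasFDerivAt (fun x : ι → ℝ => Real.log (∑ j, Real.exp (x j)))
      (∑ j, softmax x j • (ContinuousLinearMap.proj j : (ι → ℝ) →L[ℝ] ℝ)) x := by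
  have sum_exp : HasFDerivAt (fun x : ι → ℝ => ∑ j, Real.exp (x j))
      (∑ j, Real.exp (x j) • (ContinuousLinearMap.proj j : (ι → ℝ) →L[ℝ] ℝ)) x :=
    HasFDerivAt.fun_sum fun j _ => (hasFDerivAt_apply j x).exp
  refine (sum_exp.log (sum_exp_pos x).ne').congr_fderiv ?_
  simp only [smul_sum, smul_smul, softmax, inv_mul_eq_div]

lemma hasFDerivAt_softmax (x : ι → ℝ) (i : ι) :
    HasFDerivAt (fun x : ι → ℝ => softmax x i)
      (softmax x i • ((ContinuousLinearMap.proj i : (ι → ℝ) →L[ℝ] ℝ) -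
        ∑ j, softmax x j • (ContinuousLinearMap.proj j : (ι → ℝ) →L[ℝ] ℝ))) x := by
  have : Nonempty ι := ⟨i⟩
  simpa only [← softmax_eq_exp_sub_log] using
    ((hasFDerivAt_apply i x).fun_sub (hasFDerivAt_log_sum_exp x)).exp

lemma hasFDerivAt_softPool (x : ι → ℝ) :
    HasFDerivAt softPool
      (∑ i, softPoolGradient x i • (ContinuousLinearMap.proj i : (ι → ℝ) →L[ℝ] ℝ)) x := by
  have product_rule := HasFDerivAt.fun_sum (u := univ) fun i _ =>
    (hasFDerivAt_softmax x i).fun_mul (hasFDerivAt_apply (𝕜 := ℝ) i x)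
  refine product_rule.congr_fderiv ?_
  ext v
  have collect (m : ℝ) : ∑ i, (softmax x i * v i + x i * (softmax x i * (v i - m)))
      = ∑ i, softmax x i * (1 + x i) * v i - softPool x * m := by
    rw [softPool, sum_mul, ← sum_sub_distrib]
    exact sum_congr rfl fun i _ => by ring
  have gradient : ∑ i, softmax x i * (1 + x i) * v i - softPool x * ∑ i, softmax x i * v i
      = ∑ i, softPoolGradient x i * v i := by
    rw [mul_sum, ← sum_sub_distrib]
    exact sum_congr rfl fun i _ => by rw [softPoolGradient]; ring
  simpa using (collect _).trans gradient

theorem abs_softPool_sub_softPool_le [Nonempty ι] (x y : ι → ℝ) :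
    |softPool x - softPool y| ≤ (1 + 2 * Fintype.card ι * Real.exp (-2)) * ‖x - y‖ := by
  rw [← Real.norm_eq_abs]
  exact convex_univ.norm_image_sub_le_of_norm_hasFDerivWithin_le (𝕜 := ℝ)
    (fun z _ => (hasFDerivAt_softPool z).hasFDerivWithinAt)
    (fun z _ => (norm_sum_smul_proj_le _).trans (sum_abs_softPoolGradient_le z))
    (Set.mem_univ y) (Set.mem_univ x)

theorem softpool_lipschitz_sup_norm_general (hι : 3 ≤ Fintype.card ι) (x y : ι → ℝ) :
    |softPool x - softPool y| ≤ (Fintype.card ι - 1) * ‖x - y‖ := by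
  have : Nonempty ι := Fintype.card_pos_iff.1 (by omega)
  have hn : (3 : ℝ) ≤ Fintype.card ι := by exact_mod_cast hι
  refine (abs_softPool_sub_softPool_le x y).trans ?_
  gcongr
  nlinarith [exp_neg_two_le_one_div_six]

end SoftPool

/-- Appendix B: the SoftPool output `S(x) = ∑ i (exp(x i) / ∑ j exp(x j)) * x i` on a
kernel region of size `k̂ × k̂` (so `n = k̂²` feature values) is Lipschitz continuous with
constant `L₂′ = k̂² − 1` with respect to the supremum norm:
`|S(x) − S(y)| ≤ (k̂² − 1) · max_i |x i − y i|`. -/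
theorem softpool_lipschitz_sup_norm
    (khat : ℕ) (hk : 2 ≤ khat)
    (S : (Fin (khat ^ 2) → ℝ) → ℝ)
    (hS : ∀ x, S x = ∑ i, (Real.exp (x i) / ∑ j, Real.exp (x j)) * x i)
    (x y : Fin (khat ^ 2) → ℝ) :
    |S x - S y| ≤ ((khat : ℝ) ^ 2 - 1) *
      (Finset.univ.sup' ⟨⟨0, pow_pos (by omega) 2⟩, Finset.mem_univ _⟩
        fun i => |x i - y i|) := by
  obtain rfl : S = softPool := funext hS
  have hcard : 3 ≤ Fintype.card (Fin (khat ^ 2)) := by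
    rw [Fintype.card_fin]
    nlinarith
  simpa [pi_norm_eq_sup'_norm (card_pos.1 (hcard.trans_lt' (by norm_num)))] using
    softpool_lipschitz_sup_norm_general hcard x y
end

section
/- For every p with 0 ≤ p < 0.1 and every integer N ≥ 21, the security probability ∑_{i=0}^{⌊(N−1)/3⌋} C(N, i) p^i (1−p)^{N−i} exceeds 0.99. -/
/-! For `X ∼ Bin(N, p)` the binomial moment `E[C(X, m)]` is `C(N, m) pᵐ`, so Markov's inequality
gives `P(X ≥ k) ≤ C(N, m) pᵐ / C(k, m)`. If `N ≤ c k`, the ratio `C(N, m) / C(k, m)` is at most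
`∏ j < m, (c k - j) / (k - j)`, which is nonincreasing in `k`, so the smallest `k` is the worst one.
BFT-detect fails when `X ≥ k` for `k = ⌊(N - 1) / 3⌋ + 1`. Here `N ≤ 3 k`, and `k ≥ 7` as soon as
`N ≥ 19`; the choice `m = 6` then bounds the failure probability by
`C(21, 6) / C(7, 6) * p ^ 6 = 7752 p ^ 6`, which is below `0.01` for `p < 0.1`. -/

open Finset

section BinomialMoments

variable {R : Type*} [CommSemiring R]

theorem sum_choose_mul_binomial_term (x y : R) (n m : ℕ) :
    ∑ i ∈ range (n + 1), (i.choose m : R) * (n.choose i * x ^ i * y ^ (n - i)) =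
      n.choose m * x ^ m * (x + y) ^ (n - m) := by
  rcases lt_or_ge n m with hnm | hmn
  · rw [Nat.choose_eq_zero_of_lt hnm]
    simp only [Nat.cast_zero, zero_mul]
    refine sum_eq_zero fun i hi => ?_
    rw [Nat.choose_eq_zero_of_lt ((mem_range_succ_iff.mp hi).trans_lt hnm), Nat.cast_zero, zero_mul]
  · obtain ⟨d, rfl⟩ := Nat.exists_eq_add_of_le hmn
    have below : ∑ i ∈ range m,
        (i.choose m : R) * ((m + d).choose i * x ^ i * y ^ (m + d - i)) = 0 :=
      sum_eq_zero fun i hi => by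
        rw [Nat.choose_eq_zero_of_lt (mem_range.mp hi), Nat.cast_zero, zero_mul]
    rw [add_assoc, sum_range_add, below, zero_add, Nat.add_sub_cancel_left, add_pow, mul_sum]
    refine sum_congr rfl fun j _ => ?_
    have choose_mul_choose : ((m + d).choose (m + j) : R) * (m + j).choose m =
        (m + d).choose m * d.choose j := by
      simpa only [Nat.add_sub_cancel_left, Nat.cast_mul] using
        congrArg (Nat.cast (R := R)) (Nat.choose_mul (n := m + d) (Nat.le_add_right m j))
    rw [Nat.add_sub_add_left]
    calc ((m + j).choose m : R) * ((m + d).choose (m + j) * x ^ (m + j) * y ^ (d - j))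
        = (m + d).choose (m + j) * (m + j).choose m * (x ^ m * x ^ j * y ^ (d - j)) := by ring
      _ = (m + d).choose m * x ^ m * (x ^ j * y ^ (d - j) * d.choose j) := by
          rw [choose_mul_choose]; ring

theorem choose_mul_binomial_tail_le [PartialOrder R] [IsOrderedRing R] {x y : R}
    (hx : 0 ≤ x) (hy : 0 ≤ y) (n m k : ℕ) :
    (k.choose m : R) * ∑ i ∈ Ico k (n + 1), (n.choose i : R) * x ^ i * y ^ (n - i) ≤
      n.choose m * x ^ m * (x + y) ^ (n - m) := by
  have term_nonneg (i : ℕ) : 0 ≤ (n.choose i : R) * x ^ i * y ^ (n - i) := by positivity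
  calc (k.choose m : R) * ∑ i ∈ Ico k (n + 1), (n.choose i : R) * x ^ i * y ^ (n - i)
      = ∑ i ∈ Ico k (n + 1), (k.choose m : R) * (n.choose i * x ^ i * y ^ (n - i)) := mul_sum ..
    _ ≤ ∑ i ∈ Ico k (n + 1), (i.choose m : R) * (n.choose i * x ^ i * y ^ (n - i)) :=
        sum_le_sum fun i hi => mul_le_mul_of_nonneg_right
          (Nat.mono_cast (Nat.choose_le_choose m (mem_Ico.mp hi).1)) (term_nonneg i)
    _ ≤ ∑ i ∈ range (n + 1), (i.choose m : R) * (n.choose i * x ^ i * y ^ (n - i)) :=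
        sum_le_sum_of_subset_of_nonneg (fun i hi => mem_range.mpr (mem_Ico.mp hi).2)
          fun i _ _ => mul_nonneg (Nat.cast_nonneg _) (term_nonneg i)
    _ = n.choose m * x ^ m * (x + y) ^ (n - m) := sum_choose_mul_binomial_term x y n m

end BinomialMoments

theorem mul_sub_mul_sub_le_mul_sub_mul_sub {b k : ℕ} (hbk : b ≤ k) (c j : ℕ) :
    (c * k - j) * (b - j) ≤ (c * b - j) * (k - j) := by
  rcases le_or_gt b j with hbj | hjb
  · simp only [Nat.sub_eq_zero_of_le hbj, mul_zero, zero_le]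
  rcases c with _ | c
  · simp only [zero_mul, Nat.zero_sub, le_refl]
  obtain ⟨s, rfl⟩ := Nat.exists_eq_add_of_le hjb.le
  obtain ⟨t, rfl⟩ := Nat.exists_eq_add_of_le hbk
  have sub_left : (c + 1) * (j + s + t) - j = c * (j + s + t) + (s + t) := by
    rw [Nat.sub_eq_iff_eq_add (by nlinarith)]; ring
  have sub_right : (c + 1) * (j + s) - j = c * (j + s) + s := by
    rw [Nat.sub_eq_iff_eq_add (by nlinarith)]; ring
  rw [sub_left, sub_right, Nat.add_sub_cancel_left, add_assoc j s t, Nat.add_sub_cancel_left]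
  nlinarith [Nat.zero_le (c * j * t)]

theorem choose_mul_mul_choose_le {b k : ℕ} (hbk : b ≤ k) (c m : ℕ) :
    (c * k).choose m * b.choose m ≤ (c * b).choose m * k.choose m := by
  have descFactorial_le : (c * k).descFactorial m * b.descFactorial m ≤
      (c * b).descFactorial m * k.descFactorial m := by
    simp only [Nat.descFactorial_eq_prod_range, ← prod_mul_distrib]
    exact prod_le_prod' fun j _ => mul_sub_mul_sub_le_mul_sub_mul_sub hbk c j
  simp only [Nat.descFactorial_eq_factorial_mul_choose] at descFactorial_le
  rw [mul_mul_mul_comm, mul_mul_mul_comm m.factorial ((c * b).choose m)] at descFactorial_le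
  exact Nat.le_of_mul_le_mul_left descFactorial_le (by positivity)

theorem choose_mul_binomial_tail_le_of_le_mul {R : Type*} [CommSemiring R] [LinearOrder R]
    [IsStrictOrderedRing R] {p q : R} (hp : 0 ≤ p) (hq : 0 ≤ q) (hpq : p + q = 1)
    {n c b k m : ℕ} (hn : n ≤ c * k) (hbk : b ≤ k) (hmb : m ≤ b) :
    (b.choose m : R) * ∑ i ∈ Ico k (n + 1), (n.choose i : R) * p ^ i * q ^ (n - i) ≤
      (c * b).choose m * p ^ m := by
  set tail := ∑ i ∈ Ico k (n + 1), (n.choose i : R) * p ^ i * q ^ (n - i)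
  have markov : (k.choose m : R) * tail ≤ n.choose m * p ^ m := by
    simpa only [hpq, one_pow, mul_one] using choose_mul_binomial_tail_le hp hq n m k
  have choose_le : (n.choose m * b.choose m : R) ≤ (c * b).choose m * k.choose m := by
    exact_mod_cast (Nat.mul_le_mul_right _ (Nat.choose_le_choose m hn)).trans
      (choose_mul_mul_choose_le hbk c m)
  have choose_pos : (0 : R) < k.choose m := Nat.cast_pos.mpr (Nat.choose_pos (hmb.trans hbk))
  refine le_of_mul_le_mul_left ?_ choose_pos
  calc (k.choose m : R) * (b.choose m * tail)
      = b.choose m * (k.choose m * tail) := mul_left_comm ..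
    _ ≤ b.choose m * (n.choose m * p ^ m) := by gcongr
    _ = n.choose m * b.choose m * p ^ m := by ring
    _ ≤ (c * b).choose m * k.choose m * p ^ m := by gcongr
    _ = k.choose m * ((c * b).choose m * p ^ m) := by ring

theorem security_probability_gt_099_general
    (p : ℝ) (hp0 : 0 ≤ p) (hp1 : p ≤ 1) (N : ℕ) (hN : 19 ≤ N) :
    1 - 7752 * p ^ 6 ≤
      ∑ i ∈ Finset.range ((N - 1) / 3 + 1),
        (N.choose i : ℝ) * p ^ i * (1 - p) ^ (N - i) := by
  have total : ∑ i ∈ range (N + 1), (N.choose i : ℝ) * p ^ i * (1 - p) ^ (N - i) = 1 := by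
    simpa only [Nat.choose_zero_right, Nat.cast_one, one_mul, pow_zero, add_sub_cancel, one_pow]
      using sum_choose_mul_binomial_term p (1 - p) N 0
  have split := sum_range_add_sum_Ico
    (fun i => (N.choose i : ℝ) * p ^ i * (1 - p) ^ (N - i)) (show (N - 1) / 3 + 1 ≤ N + 1 by omega)
  have tail := choose_mul_binomial_tail_le_of_le_mul hp0 (sub_nonneg.mpr hp1)
    (add_sub_cancel p 1) (show N ≤ 3 * ((N - 1) / 3 + 1) by omega)
    (show 7 ≤ (N - 1) / 3 + 1 by omega) (show 6 ≤ 7 by norm_num)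
  have choose_seven : Nat.choose 7 6 = 7 := by decide
  have choose_twentyOne : Nat.choose (3 * 7) 6 = 7 * 7752 := by decide
  rw [choose_seven, choose_twentyOne] at tail
  push_cast at tail
  linarith

/-- For every probability `p < 0.1` of a server being malicious and every number of servers
`N ≥ 21`, the security probability `∑_{i=0}^{⌊(N−1)/3⌋} C(N,i) pⁱ (1−p)^{N−i}` of
BFT-detect exceeds `0.99`. -/
theorem security_probability_gt_099
    (p : ℝ) (hp0 : 0 ≤ p) (hp : p < 0.1) (N : ℕ) (hN : 21 ≤ N) :
    (0.99 : ℝ) <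
      ∑ i ∈ Finset.range ((N - 1) / 3 + 1),
        (N.choose i : ℝ) * p ^ i * (1 - p) ^ (N - i) := by
  have pow_le : p ^ 6 ≤ 0.1 ^ 6 := pow_le_pow_left₀ hp0 hp.le 6
  linarith [security_probability_gt_099_general p hp0 (by linarith) N (by omega)]
end
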